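/- Riesz distribution convergence: let F be a Schwartz function on M_{n,q} ≅ ℝ^{nq} with n ≥ q. The integral ζ_F(α) = ∫_{M_{n,q}} F(x) (det(xᵀx))^{(α-n)/2} dx converges absolutely for Re α > q - 1. -/

import Mathlib

open MeasureTheory Module Matrix
open scoped ENNReal Classical

noncomputable section

/-- `ℝⁿ` as a Euclidean space. -/
abbrev Euc (n : ℕ) := EuclideanSpace ℝ (Fin n)

/-- Siegel gamma function `Γ_k(α) = π^{k(k-1)/4} ∏_{j=0}^{k-1} Γ(α - j/2)`. -/
def siegelGamma (k : ℕ) (α : ℝ) : ℝ :=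
  Real.pi ^ ((k : ℝ) * ((k : ℝ) - 1) / 4) *
    ∏ j ∈ Finset.range k, Real.Gamma (α - (j : ℝ) / 2)

/-- `σ_{n,k} = 2^k π^{nk/2} / Γ_k(n/2)`, the total measure of the Stiefel manifold. -/
def sigmaStiefel (n k : ℕ) : ℝ :=
  2 ^ k * Real.pi ^ ((n : ℝ) * (k : ℝ) / 2) / siegelGamma k ((n : ℝ) / 2)

theorem rz_lintegral_pi_prod (n : ℕ) (f : Fin n → ℝ → ℝ≥0∞) (hf : ∀ i, Measurable (f i)) :
    ∫⁻ x : Fin n → ℝ, ∏ i, f i (x i) = ∏ i, ∫⁻ t, f i t := by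
  induction n with
  | zero => simp [volume_pi]
  | succ n ih =>
    have h := (volume_preserving_piFinSuccAbove (fun _ : Fin (n+1) => ℝ) 0).symm
    rw [← h.lintegral_comp_emb (MeasurableEquiv.measurableEmbedding _)]
    rw [Fin.prod_univ_succ, ← ih (fun i => f i.succ) (fun i => hf _)]
    rw [Measure.volume_eq_prod, ← lintegral_prod_mul]
    · refine lintegral_congr fun p => ?_
      rw [Fin.prod_univ_succ]
      simp [MeasurableEquiv.piFinSuccAbove]
    · exact (hf 0).aemeasurable
    · apply Measurable.aemeasurable
      refine Finset.measurable_prod _ fun i _ => (hf _).comp (measurable_pi_apply i)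

theorem rz_one_dim (t : ℝ) (ht : -1 < t) (ht0 : t ≤ 0) :
    ∫⁻ x : ℝ, ENNReal.ofReal ((1 + |x|) ^ (-2 : ℝ)) * ‖x‖ₑ ^ t < ∞ := by
  have h1 : IntegrableOn (fun y : ℝ => (1 + y) ^ (-2 : ℝ) * y ^ t) (Set.Ioi 0) := by
    have hm : Measurable (fun y : ℝ => (1 + y) ^ (-2 : ℝ) * y ^ t) := by fun_prop
    rw [← Set.Ioc_union_Ioi_eq_Ioi (zero_le_one' ℝ)]
    refine IntegrableOn.union ?_ ?_
    · have h2 : IntegrableOn (fun y : ℝ => y ^ t) (Set.Ioc 0 1) := by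
        have := (intervalIntegral.intervalIntegrable_rpow' (a := 0) (b := 1) ht)
        rwa [intervalIntegrable_iff_integrableOn_Ioc_of_le zero_le_one] at this
      refine Integrable.mono' h2 hm.aestronglyMeasurable ?_
      filter_upwards [ae_restrict_mem measurableSet_Ioc] with y hy
      have hy0 : 0 < y := hy.1
      rw [Real.norm_of_nonneg (by positivity)]
      have : (1 + y) ^ (-2 : ℝ) ≤ 1 := Real.rpow_le_one_of_one_le_of_nonpos (by linarith) (by norm_num)
      nlinarith [Real.rpow_nonneg hy0.le t]
    · have h2 : IntegrableOn (fun y : ℝ => y ^ (-2 : ℝ)) (Set.Ioi 1) :=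
        integrableOn_Ioi_rpow_of_lt (by norm_num) one_pos
      refine Integrable.mono' h2 hm.aestronglyMeasurable ?_
      filter_upwards [ae_restrict_mem measurableSet_Ioi] with y hy
      have hy1 : 1 < y := hy
      have hy0 : 0 < y := by linarith
      rw [Real.norm_of_nonneg (by positivity)]
      have h3 : y ^ t ≤ 1 := Real.rpow_le_one_of_one_le_of_nonpos hy1.le ht0
      have h4 : (1 + y) ^ (-2 : ℝ) ≤ y ^ (-2 : ℝ) :=
        Real.rpow_le_rpow_of_nonpos hy0 (by linarith) (by norm_num)
      calc _ ≤ y ^ (-2 : ℝ) * 1 := by gcongr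
        _ = _ := mul_one _
  have h2 : Integrable (fun x : ℝ => (1 + ‖x‖) ^ (-2 : ℝ) * ‖x‖ ^ t) := by
    refine (integrable_fun_norm_addHaar (volume : Measure ℝ)
      (f := fun y : ℝ => (1 + y) ^ (-2 : ℝ) * y ^ t)).2 ?_
    simpa using h1
  refine lt_of_le_of_lt (le_of_eq ?_) h2.2
  refine lintegral_congr_ae ?_
  have : ∀ᵐ x : ℝ, x ≠ 0 := by simp [ae_iff]
  filter_upwards [this] with x hx
  have hx' : 0 < |x| := abs_pos.2 hx
  have e : ‖x‖ₑ = ENNReal.ofReal |x| := by rw [← ofReal_norm, Real.norm_eq_abs]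
  have hn : (0 : ℝ) ≤ (1 + |x|) ^ (-2 : ℝ) * |x| ^ t := by positivity
  rw [Real.norm_eq_abs, Real.enorm_of_nonneg hn, ENNReal.ofReal_mul (by positivity), e,
    ENNReal.ofReal_rpow_of_pos hx']

theorem rz_basis (n m : ℕ) (W : Submodule ℝ (Euc n)) (hW : m ≤ finrank ℝ W) :
    ∃ b : OrthonormalBasis (Fin n) ℝ (Euc n), ∀ i : Fin n, (i : ℕ) < m → b i ∈ W := by
  let v : Fin n → Euc n := fun i => if h : (i : ℕ) < finrank ℝ W then
    (stdOrthonormalBasis ℝ W ⟨i, h⟩ : Euc n) else 0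
  have hv : Orthonormal ℝ (Set.domRestrict {i : Fin n | (i : ℕ) < m} v) := by
    have h1 : Orthonormal ℝ (fun j => (stdOrthonormalBasis ℝ W j : Euc n)) :=
      (stdOrthonormalBasis ℝ W).orthonormal.comp_linearIsometry W.subtypeₗᵢ
    have h2 := h1.comp (fun i : {i : Fin n | (i : ℕ) < m} =>
      (⟨(i : Fin n), lt_of_lt_of_le i.2 hW⟩ : Fin (finrank ℝ W))) (by
        intro a b hab
        simp only [Fin.mk.injEq] at hab
        exact Subtype.ext (Fin.ext hab))
    convert h2 using 1
    ext1 i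
    have : ((i : Fin n) : ℕ) < finrank ℝ W := lt_of_lt_of_le i.2 hW
    simp [v, Set.domRestrict, this]
  obtain ⟨b, hb⟩ := hv.exists_orthonormalBasis_extension_of_card_eq (by simp)
  refine ⟨b, fun i hi => ?_⟩
  rw [hb i hi]
  have : (i : ℕ) < finrank ℝ W := lt_of_lt_of_le hi hW
  simp [v, this]

theorem rz_rpow_sum {n : ℕ} (x : ℝ≥0∞) (t : Fin n → ℝ) (ht : ∀ i, t i ≤ 0) (S : Finset (Fin n)) :
    x ^ (∑ i ∈ S, t i) = ∏ i ∈ S, x ^ (t i) := by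
  have h : ∀ r : ℝ, x ^ r = x⁻¹ ^ (-r) := fun r => by rw [ENNReal.inv_rpow, ENNReal.rpow_neg, inv_inv]
  induction S using Finset.induction_on with
  | empty => simp
  | insert a S ha ih =>
    rw [Finset.sum_insert ha, Finset.prod_insert ha, ← ih, h, neg_add, ENNReal.rpow_add_of_nonneg,
      ← h, ← h]
    · linarith [ht a]
    · linarith [Finset.sum_nonpos fun i (_ : i ∈ S) => ht i]

theorem rz_uniform (n k : ℕ) (hkn : k < n) (s N : ℝ) (hs : (k : ℝ) - n < s) (hN : 2 * (n : ℝ) ≤ N)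
    (hN' : n + s < N) :
    ∃ C : ℝ≥0∞, C < ∞ ∧ ∀ V : Submodule ℝ (Euc n), finrank ℝ V ≤ k →
      ∫⁻ v : Euc n, ENNReal.ofReal ((1 + ‖v‖) ^ (-N)) * ‖Vᗮ.starProjection v‖ₑ ^ s ≤ C := by
  rcases le_or_gt 0 s with h0 | h0
  · refine ⟨∫⁻ v : Euc n, ENNReal.ofReal ((1 + ‖v‖) ^ (-(N - s))),
      finite_integral_one_add_norm (by simp; linarith), fun V _ => lintegral_mono fun v => ?_⟩
    have e : ‖Vᗮ.starProjection v‖ₑ ≤ ENNReal.ofReal (1 + ‖v‖) := by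
      rw [← ofReal_norm]
      apply ENNReal.ofReal_le_ofReal
      linarith [Vᗮ.norm_starProjection_apply_le v]
    calc _ ≤ ENNReal.ofReal ((1 + ‖v‖) ^ (-N)) * ENNReal.ofReal (1 + ‖v‖) ^ s := by gcongr
      _ = _ := by
        rw [ENNReal.ofReal_rpow_of_pos (by positivity), ← ENNReal.ofReal_mul (by positivity),
          ← Real.rpow_add (by positivity)]
        congr 2; ring
  · set m := n - k with hm
    have hm0 : (0 : ℝ) < m := by simp [hm]; omega
    have hmr : (m : ℝ) = n - k := by rw [hm, Nat.cast_sub hkn.le]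
    let t : Fin n → ℝ := fun i => if (i : ℕ) < m then s / m else 0
    have ht : ∀ i, -1 < t i ∧ t i ≤ 0 := by
      intro i
      by_cases hi : (i : ℕ) < m
      · simp only [t, hi, if_true]
        refine ⟨?_, (div_neg_of_neg_of_pos h0 hm0).le⟩
        rw [lt_div_iff₀ hm0]; linarith
      · simp [t, hi]
    let f : Fin n → ℝ → ℝ≥0∞ := fun i x => ENNReal.ofReal ((1 + |x|) ^ (-2 : ℝ)) * ‖x‖ₑ ^ (t i)
    have hf : ∀ i, Measurable (f i) := fun i => by
      have : Measurable fun x : ℝ => |x| := continuous_abs.measurable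
      fun_prop
    refine ⟨∏ i, ∫⁻ x, f i x, ENNReal.prod_lt_top fun i _ => rz_one_dim _ (ht i).1 (ht i).2,
      fun V hV => ?_⟩
    have hfr : m ≤ finrank ℝ Vᗮ := by
      have := V.finrank_add_finrank_orthogonal
      simp at this
      omega
    obtain ⟨b, hb⟩ := rz_basis n m Vᗮ hfr
    have hpt : ∀ v : Euc n, ENNReal.ofReal ((1 + ‖v‖) ^ (-N)) * ‖Vᗮ.starProjection v‖ₑ ^ s ≤
        ∏ i, f i (b.repr v i) := by
      intro v
      have habs : ∀ i, |b.repr v i| ≤ ‖v‖ := fun i => by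
        rw [← b.repr.norm_map v]
        exact PiLp.norm_apply_le (b.repr v) i
      have hP : ∀ i : Fin n, (i : ℕ) < m → |b.repr v i| ≤ ‖Vᗮ.starProjection v‖ := fun i hi => by
        have e : b.repr v i = b.repr (Vᗮ.starProjection v) i := by
          rw [b.repr_apply_apply, b.repr_apply_apply, ← Submodule.inner_starProjection_left_eq_right,
            Submodule.starProjection_eq_self_iff.2 (hb i hi)]
        rw [e, ← b.repr.norm_map (Vᗮ.starProjection v)]
        exact PiLp.norm_apply_le (b.repr (Vᗮ.starProjection v)) i
      simp only [f]
      rw [Finset.prod_mul_distrib]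
      gcongr
      · rw [← ENNReal.ofReal_prod_of_nonneg (fun i _ => by positivity)]
        apply ENNReal.ofReal_le_ofReal
        calc (1 + ‖v‖) ^ (-N) ≤ (1 + ‖v‖) ^ ((-2 : ℝ) * n) :=
              Real.rpow_le_rpow_of_exponent_le (by linarith [norm_nonneg v]) (by linarith)
          _ = ∏ i : Fin n, (1 + ‖v‖) ^ (-2 : ℝ) := by
              rw [Finset.prod_const, Real.rpow_mul (by positivity)]; simp
          _ ≤ _ := Finset.prod_le_prod (fun i _ => by positivity) fun i _ =>
              Real.rpow_le_rpow_of_nonpos (by positivity) (by linarith [habs i]) (by norm_num)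
      · have hsum : s = ∑ i, t i := by
          have hc : (Finset.univ.filter fun i : Fin n => (i : ℕ) < m).card = m := by
            rw [Fin.card_filter_val_lt]; omega
          simp only [t]
          rw [← Finset.sum_filter, Finset.sum_const, hc, nsmul_eq_mul]
          field_simp
        have key : ‖Vᗮ.starProjection v‖ₑ ^ s ≤ ∏ i, ‖Vᗮ.starProjection v‖ₑ ^ (t i) := by
          conv_lhs => rw [hsum]
          exact (rz_rpow_sum _ t (fun i => (ht i).2) _).le
        refine key.trans (Finset.prod_le_prod' fun i _ => ?_)
        by_cases hi : (i : ℕ) < m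
        · have e : ‖b.repr v i‖ₑ ≤ ‖Vᗮ.starProjection v‖ₑ := by
            rw [← ofReal_norm, ← ofReal_norm]
            exact ENNReal.ofReal_le_ofReal (hP i hi)
          have := (ht i).2
          rw [← neg_neg (t i), ENNReal.rpow_neg, ENNReal.rpow_neg _ (-t i)]
          apply ENNReal.inv_le_inv.2
          exact ENNReal.rpow_le_rpow e (by linarith)
        · simp [t, hi]
    calc _ ≤ ∫⁻ v : Euc n, ∏ i, f i (b.repr v i) := lintegral_mono hpt
      _ = ∫⁻ u : Euc n, ∏ i, f i (u i) :=
        b.measurePreserving_repr.lintegral_comp_emb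
          b.repr.toHomeomorph.measurableEmbedding (fun u : Euc n => ∏ i, f i (u i))
      _ = ∫⁻ x : Fin n → ℝ, ∏ i, f i (x i) :=
        ((PiLp.volume_preserving_ofLp (Fin n)).lintegral_comp
          (f := fun x : Fin n → ℝ => ∏ i, f i (x i)) (by fun_prop))
      _ = _ := rz_lintegral_pi_prod n f hf
      _ ≤ _ := le_rfl

/-- Gram determinant. -/
def rzGram {n k : ℕ} (y : Fin k → Euc n) : ℝ :=
  (Matrix.of fun i j => inner ℝ (y i) (y j)).det

theorem rzGram_cons {n k : ℕ} (v : Euc n) (y : Fin k → Euc n) :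
    rzGram (Fin.cons v y : Fin (k + 1) → Euc n) =
      ‖(Submodule.span ℝ (Set.range y))ᗮ.starProjection v‖ ^ 2 * rzGram y := by
  set V := Submodule.span ℝ (Set.range y) with hV
  set z : Fin (k + 1) → Euc n := Fin.cons v y with hz
  set r := Vᗮ.starProjection v with hr
  have hmem : V.starProjection v ∈ V := Submodule.starProjection_apply_mem _ _
  have hrm : r ∈ Vᗮ := Submodule.starProjection_apply_mem _ _
  have hsum : V.starProjection v + r = v := Submodule.starProjection_add_starProjection_orthogonal v
  obtain ⟨c, hc⟩ := (Submodule.mem_span_range_iff_exists_fun ℝ).1 hmem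
  set M : Matrix (Fin (k + 1)) (Fin (k + 1)) ℝ := Matrix.of fun i j => inner ℝ (z i) (z j) with hM
  let d : Fin (k + 1) → ℝ := Fin.cons 1 (fun i => - c i)
  have hrow : (∑ i, d i • M i) = fun j => inner ℝ r (z j) := by
    have hr' : r = ∑ i, d i • z i := by
      rw [Fin.sum_univ_succ]
      simp only [d, z, Fin.cons_zero, Fin.cons_succ, one_smul, neg_smul, Finset.sum_neg_distrib, hc]
      rw [← sub_eq_add_neg, eq_sub_iff_add_eq, add_comm]
      exact hsum
    ext j
    rw [hr', sum_inner]
    simp [M, inner_smul_left]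
  have h1 := Matrix.det_updateRow_sum M 0 d
  rw [hrow] at h1
  have hd0 : d 0 = 1 := rfl
  rw [hd0, one_smul] at h1
  have hry : ∀ i, inner ℝ r (y i) = 0 := fun i =>
    Submodule.inner_left_of_mem_orthogonal (K := V) (Submodule.subset_span (Set.mem_range_self i)) hrm
  have hrv : inner ℝ r v = ‖r‖ ^ 2 := by
    conv_lhs => rw [← hsum, inner_add_right, Submodule.inner_left_of_mem_orthogonal hmem hrm,
      zero_add, real_inner_self_eq_norm_sq]
  unfold rzGram
  rw [← hM, ← h1, Matrix.det_succ_row_zero, Fin.sum_univ_succ]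
  simp only [Matrix.updateRow_self]
  have hz0 : z 0 = v := rfl
  have hzs : ∀ i : Fin k, z i.succ = y i := fun i => rfl
  simp only [hz0, hzs, hry, hrv]
  simp
  left
  congr 1

theorem rzGram_continuous {n k : ℕ} : Continuous (rzGram : (Fin k → Euc n) → ℝ) := by
  unfold rzGram
  apply Continuous.matrix_det
  refine continuous_matrix fun i j => ?_
  simp only [Matrix.of_apply]
  fun_prop

theorem rz_main (n : ℕ) (s N : ℝ) (hN : 2 * (n : ℝ) ≤ N) (hN' : n + s < N) (k : ℕ) (hk : k ≤ n)
    (hs : (k : ℝ) - 1 - n < s) :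
    ∫⁻ y : Fin k → Euc n, (∏ i, ENNReal.ofReal ((1 + ‖y i‖) ^ (-N))) *
      ENNReal.ofReal (rzGram y) ^ (s / 2) < ∞ := by
  induction k with
  | zero => simp [rzGram, volume_pi]
  | succ k ih =>
    push_cast at hs
    have ih' := ih (by omega) (by linarith)
    obtain ⟨C, hC, hCV⟩ := rz_uniform n k (by omega) s N (by linarith) hN hN'
    have h := (volume_preserving_piFinSuccAbove (fun _ : Fin (k+1) => Euc n) 0).symm
    have hmeas : ∀ l, Measurable fun y : Fin l → Euc n =>
        (∏ i, ENNReal.ofReal ((1 + ‖y i‖) ^ (-N))) * ENNReal.ofReal (rzGram y) ^ (s / 2) := by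
      intro l
      have := (rzGram_continuous (n := n) (k := l)).measurable
      fun_prop
    rw [← h.lintegral_comp (hmeas _), Measure.volume_eq_prod]
    have hpm := ((hmeas (k + 1)).comp h.measurable).aemeasurable
      (μ := (volume : Measure (Euc n)).prod (volume : Measure (Fin k → Euc n)))
    refine lt_of_eq_of_lt (lintegral_prod_symm _ hpm) ?_
    refine lt_of_le_of_lt (b := ∫⁻ y : Fin k → Euc n, ((∏ i, ENNReal.ofReal ((1 + ‖y i‖) ^ (-N))) *
      ENNReal.ofReal (rzGram y) ^ (s / 2)) * C) (lintegral_mono fun y => ?_) ?_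
    · refine le_trans ?_ (mul_le_mul_right (hCV (Submodule.span ℝ (Set.range y)) ?_) _)
      · rw [← lintegral_const_mul]
        · refine lintegral_mono fun v => ?_
          have e : (MeasurableEquiv.piFinSuccAbove (fun _ : Fin (k+1) => Euc n) 0).symm (v, y) =
            (Fin.cons v y : Fin (k + 1) → Euc n) := by
            simp [MeasurableEquiv.piFinSuccAbove]
            rfl
          simp only [e, rzGram_cons, Fin.prod_univ_succ, Fin.cons_zero, Fin.cons_succ]
          rw [ENNReal.ofReal_mul (by positivity), ENNReal.mul_rpow_of_ne_top (by simp) (by simp),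
            ENNReal.ofReal_pow (by positivity), ofReal_norm, ← ENNReal.rpow_natCast,
            ← ENNReal.rpow_mul]
          have : ((2 : ℕ) : ℝ) * (s / 2) = s := by push_cast; ring
          rw [this]
          apply le_of_eq
          ring
        · fun_prop
      · exact (finrank_range_le_card y).trans (by simp)
    · rw [lintegral_mul_const _ (hmeas k)]
      exact ENNReal.mul_lt_top ih' hC

/-- Columns of a matrix. -/
def rzCols (n q : ℕ) : (Fin n → Fin q → ℝ) ≃ₗ[ℝ] (Fin q → Euc n) where
  toFun x j := WithLp.toLp 2 fun i => x i j
  invFun y i j := y j i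
  map_add' x y := by ext; simp
  map_smul' c x := by ext; simp
  left_inv x := by ext; simp
  right_inv y := by ext; simp

/-- Riesz distribution convergence: for a Schwartz function `F` on
`M_{n,q} ≅ ℝ^{nq}` (`n ≥ q`), the Riesz-type integral
`ζ_F(α) = ∫_{M_{n,q}} F(x) (det(xᵀx))^{(α-n)/2} dx` converges absolutely
whenever `Re α > q - 1`. -/
theorem riesz_distribution_convergence (n q : ℕ) (hq : 1 ≤ q) (hqn : q ≤ n)
    (F : SchwartzMap (Fin n → Fin q → ℝ) ℂ) (α : ℂ) (hα : (q : ℝ) - 1 < α.re) :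
    Integrable (fun x : Fin n → Fin q → ℝ =>
      F x * (((((Matrix.of x)ᵀ * Matrix.of x).det : ℝ) : ℂ)) ^ ((α - (n : ℂ)) / 2)) := by
  set s : ℝ := α.re - n with hs
  obtain ⟨N, hN⟩ := exists_nat_gt (max (2 * (n : ℝ)) (n + s))
  have hN1 : 2 * (n : ℝ) ≤ N := ((le_max_left _ _).trans_lt hN).le
  have hN2 : n + s < N := (le_max_right _ _).trans_lt hN
  have hmain := rz_main n s N hN1 hN2 q hqn (by linarith)
  let L := (rzCols n q).toContinuousLinearEquiv
  have hgram : ∀ x : Fin n → Fin q → ℝ, ((Matrix.of x)ᵀ * Matrix.of x).det = rzGram (L x) := by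
    intro x
    unfold rzGram
    congr 1
    ext i j
    simp [L, rzCols, Matrix.mul_apply, PiLp.inner_apply, mul_comm]
  have hg0 : ∀ x : Fin n → Fin q → ℝ, 0 ≤ rzGram (L x) := by
    intro x
    rw [← hgram]
    have := (Matrix.posSemidef_conjTranspose_mul_self (Matrix.of x)).det_nonneg
    simpa using this
  set g : (Fin q → Euc n) → ℝ≥0∞ := fun y => (∏ i, ENNReal.ofReal ((1 + ‖y i‖) ^ (-(N : ℝ)))) *
      ENNReal.ofReal (rzGram y) ^ (s / 2) with hg
  have hgm : Measurable g := by
    have := (rzGram_continuous (n := n) (k := q)).measurable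
    fun_prop
  have hfin : ∫⁻ x, g (L x) < ∞ := by
    rw [← lintegral_map hgm L.continuous.measurable]
    have hH : (volume.map L : Measure (Fin q → Euc n)).IsAddHaarMeasure :=
      L.isAddHaarMeasure_map volume
    have hH2 : (volume : Measure (Fin q → Euc n)).IsAddHaarMeasure :=
      inferInstanceAs ((Measure.pi fun _ => volume).IsAddHaarMeasure)
    rw [Measure.isAddLeftInvariant_eq_smul (volume.map L) (volume : Measure (Fin q → Euc n)),
      lintegral_smul_measure]
    exact ENNReal.mul_lt_top (by simp) hmain
  obtain ⟨C, hC⟩ : ∃ C : ℝ, ∀ x, (1 + ‖x‖) ^ (N * q) * ‖F x‖ ≤ C := by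
    refine ⟨2 ^ (N * q) * (Finset.Iic (N * q, 0)).sup
      (fun m => SchwartzMap.seminorm ℝ m.1 m.2) F, fun x => ?_⟩
    simpa only [norm_iteratedFDeriv_zero] using SchwartzMap.one_add_le_sup_seminorm_apply (𝕜 := ℝ) (m := (N * q, 0)) (k := N * q)
      (n := 0) le_rfl le_rfl F x
  have hn1 : (1 : ℝ) ≤ n := by exact_mod_cast hq.trans hqn
  have hbound : ∀ x, ‖F x‖ ≤ (C * (n : ℝ) ^ (N * q)) * ∏ i, (1 + ‖L x i‖) ^ (-(N : ℝ)) := by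
    intro x
    have hcol : ∀ i, 1 + ‖L x i‖ ≤ n * (1 + ‖x‖) := by
      intro i
      have h1 : ‖L x i‖ ≤ ∑ j, ‖(L x i) j‖ := by
        have h3 : ‖L x i‖ ^ 2 ≤ (∑ j, ‖(L x i) j‖) ^ 2 := by
          rw [EuclideanSpace.norm_sq_eq]
          exact Finset.sum_sq_le_sq_sum_of_nonneg fun j _ => norm_nonneg _
        exact (sq_le_sq₀ (norm_nonneg _) (Finset.sum_nonneg fun j _ => norm_nonneg _)).1 h3
      have h2 : ∑ j, ‖(L x i) j‖ ≤ n * ‖x‖ := by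
        calc _ ≤ ∑ j : Fin n, ‖x‖ := Finset.sum_le_sum fun j _ =>
              (norm_le_pi_norm (x j) i).trans (norm_le_pi_norm x j)
          _ = _ := by simp
      linarith
    have hprod : ∏ i, (1 + ‖L x i‖) ^ N ≤ (n : ℝ) ^ (N * q) * (1 + ‖x‖) ^ (N * q) := by
      calc _ ≤ ∏ i : Fin q, ((n : ℝ) * (1 + ‖x‖)) ^ N :=
            Finset.prod_le_prod (fun i _ => by positivity) fun i _ => by
              have := hcol i
              gcongr
        _ = _ := by simp [← pow_mul, mul_pow]
    have e : ∏ i, (1 + ‖L x i‖) ^ (-(N : ℝ)) = (∏ i, (1 + ‖L x i‖) ^ N)⁻¹ := by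
      rw [← Finset.prod_inv_distrib]
      refine Finset.prod_congr rfl fun i _ => ?_
      rw [Real.rpow_neg (by positivity), Real.rpow_natCast]
    rw [e, ← div_eq_mul_inv, le_div_iff₀ (Finset.prod_pos fun i _ => by positivity)]
    calc _ ≤ ‖F x‖ * ((n : ℝ) ^ (N * q) * (1 + ‖x‖) ^ (N * q)) := by gcongr
      _ = (n : ℝ) ^ (N * q) * ((1 + ‖x‖) ^ (N * q) * ‖F x‖) := by ring
      _ ≤ (n : ℝ) ^ (N * q) * C := by gcongr; exact hC x
      _ = _ := by ring
  have hC0 : 0 ≤ C := le_trans (by positivity) (hC 0)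
  have hre : ((α - (n : ℂ)) / 2).re = s / 2 := by simp [hs]
  have hcpow : ∀ x, ‖((rzGram (L x) : ℝ) : ℂ) ^ ((α - (n : ℂ)) / 2)‖ₑ ≤
      ENNReal.ofReal (rzGram (L x)) ^ (s / 2) := by
    intro x
    rcases (hg0 x).eq_or_lt with h0 | h0
    · rw [← h0]
      by_cases hz : (α - (n : ℂ)) / 2 = 0
      · rw [← hre, hz]; simp
      · rw [Complex.ofReal_zero, Complex.zero_cpow hz]; simp
    · rw [← ofReal_norm, Complex.norm_cpow_eq_rpow_re_of_pos h0, hre,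
        ENNReal.ofReal_rpow_of_pos h0]
  constructor
  · refine F.continuous.aestronglyMeasurable.mul ?_
    simp only [hgram]
    have h1 : Measurable fun x => rzGram (L x) :=
      (rzGram_continuous.comp L.continuous).measurable
    have h2 : Measurable fun x => ((rzGram (L x) : ℝ) : ℂ) ^ ((α - (n : ℂ)) / 2) :=
      (Complex.measurable_ofReal.comp h1).pow_const _
    exact h2.aestronglyMeasurable
  · refine lt_of_le_of_lt (b := ∫⁻ x, ENNReal.ofReal (C * (n : ℝ) ^ (N * q)) * g (L x))
      (lintegral_mono fun x => ?_) ?_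
    · simp only [hgram, hg]
      rw [enorm_mul, ← mul_assoc]
      gcongr
      · rw [← ENNReal.ofReal_prod_of_nonneg (fun i _ => by positivity),
          ← ENNReal.ofReal_mul (by positivity), ← ofReal_norm]
        exact ENNReal.ofReal_le_ofReal (hbound x)
      · exact hcpow x
    · have hgL : Measurable fun x => g (L x) := hgm.comp L.continuous.measurable
      rw [lintegral_const_mul _ hgL]
      exact ENNReal.mul_lt_top (by simp) hfin

end
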